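/- Let V be an n-dimensional real inner product space (n ≥ 2), W a real inner product space, ζ : V × V → W a symmetric bilinear map, and T the tensor defined by the algebraic Gauss equation. Let r be a real number with 0 < r < n(n−1) and a(r) = (n−1)(n+r)(n²−n−r)/(nr). Then for every orthonormal basis (e_1,…,e_n) of V, writing ζ_{ij} = ζ(e_i,e_j), τ_T = Σ_{1≤i<j≤n} T(e_i,e_j,e_j,e_i), C^{T,ζ} = (1/n) Σ_{i,j=1}^n ‖ζ_{ij}‖², and C^{T,ζ}(Π_{n−1}) = (1/(n−1)) Σ_{i,j=1}^{n−1} ‖ζ_{ij}‖² for the hyperplane Π_{n−1} spanned by e_1,…,e_{n−1}, one has 2τ_T/(n(n−1)) ≤ (1/(n(n−1))) ( r · C^{T,ζ} + a(r) · C^{T,ζ}(Π_{n−1}) ). In particular, the T-normalized scalar curvature is bounded above by (1/(n(n−1))) times the algebraic Casorati curvature δ_{C^{T,ζ}}(r;n−1) = r·C^{T,ζ} + a(r)·inf over hyperplanes of C^{T,ζ}(Π_{n−1}). -/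

import Mathlib

open RealInnerProductSpace

/-!
By the Gauss equation, twice the scalar curvature is `‖∑ᵢ ζᵢᵢ‖² - ∑ᵢⱼ ‖ζᵢⱼ‖²`. Split the trace into
its part `A` tangent to the hyperplane and its normal part `B = ζₖₖ`. Titu's lemma with weights `r`
and `n` gives `‖A + B‖² ≤ (n + r) (‖A‖² / r + ‖B‖² / n)`, and Cauchy-Schwarz gives
`‖A‖² ≤ (n - 1) D`, where `D` is the sum of the squared norms of the diagonal entries along the
hyperplane. The condition `r ≤ n (n - 1)` is what makes the coefficients nonnegative when
`n (n - 1) D + r ‖B‖²` is written as `r (D + ‖B‖²) + (n (n - 1) - r) D`. Bounding `D + ‖B‖²` by the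
sum over all entries and the second `D` by the sum over the hyperplane produces the two Casorati
curvatures.
-/

open Finset

section SumInequalities

variable {ι : Type*}

theorem two_nsmul_sum_sum_ite_lt {M : Type*} [Fintype ι] [LinearOrder ι] [AddCommMonoid M]
    {f : ι → ι → M} (hsymm : ∀ i j, f i j = f j i) (hdiag : ∀ i, f i i = 0) :
    2 • (∑ i, ∑ j, if i < j then f i j else 0) = ∑ i, ∑ j, f i j := by
  have hswap : (∑ i, ∑ j, if i < j then f i j else 0) = ∑ i, ∑ j, if j < i then f i j else 0 := by
    rw [sum_comm]
    simp only [hsymm]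
  rw [two_nsmul]
  nth_rewrite 2 [hswap]
  simp only [← sum_add_distrib]
  refine sum_congr rfl fun i _ => sum_congr rfl fun j _ => ?_
  rcases lt_trichotomy i j with hij | rfl | hij
  · simp [hij, hij.not_gt]
  · simp [hdiag]
  · simp [hij, hij.not_gt]

theorem sum_diag_le_sum_sum {M : Type*} [AddCommMonoid M] [PartialOrder M] [IsOrderedAddMonoid M]
    (s : Finset ι) {f : ι → ι → M} (hf : ∀ i j, 0 ≤ f i j) :
    ∑ i ∈ s, f i i ≤ ∑ i ∈ s, ∑ j ∈ s, f i j :=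
  sum_le_sum fun i hi => single_le_sum (fun j _ => hf i j) hi

theorem add_sq_le_add_mul_add_sq_div {K : Type*} [Field K] [LinearOrder K] [IsStrictOrderedRing K]
    (a b : K) {p q : K} (hp : 0 < p) (hq : 0 < q) :
    (a + b) ^ 2 ≤ (p + q) * (a ^ 2 / p + b ^ 2 / q) := by
  have titu := sq_sum_div_le_sum_sq_div univ ![a, b] (g := ![p, q])
    (by simp [Fin.forall_fin_two, hp, hq])
  simp only [Fin.sum_univ_two, Matrix.cons_val_zero, Matrix.cons_val_one] at titu
  rwa [div_le_iff₀' (by positivity)] at titu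

variable {E : Type*} [SeminormedAddCommGroup E]

theorem norm_sum_sq_le_card_mul_sum_norm_sq (s : Finset ι) (v : ι → E) :
    ‖∑ i ∈ s, v i‖ ^ 2 ≤ #s * ∑ i ∈ s, ‖v i‖ ^ 2 :=
  calc
    ‖∑ i ∈ s, v i‖ ^ 2 ≤ (∑ i ∈ s, ‖v i‖) ^ 2 := by gcongr; exact norm_sum_le _ _
    _ ≤ #s * ∑ i ∈ s, ‖v i‖ ^ 2 := sq_sum_le_card_mul_sum_sq

theorem norm_sum_sq_le_add_mul_sum_erase [DecidableEq ι] {s : Finset ι} {k : ι} (hk : k ∈ s)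
    (v : ι → E) {p q : ℝ} (hp : 0 < p) (hq : 0 < q) :
    ‖∑ i ∈ s, v i‖ ^ 2 ≤
      (p + q) * ((#s - 1) * (∑ i ∈ s.erase k, ‖v i‖ ^ 2) / p + ‖v k‖ ^ 2 / q) :=
  calc
    ‖∑ i ∈ s, v i‖ ^ 2 ≤ (‖∑ i ∈ s.erase k, v i‖ + ‖v k‖) ^ 2 := by
      rw [← sum_erase_add s v hk]
      gcongr
      exact norm_add_le _ _
    _ ≤ (p + q) * (‖∑ i ∈ s.erase k, v i‖ ^ 2 / p + ‖v k‖ ^ 2 / q) :=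
      add_sq_le_add_mul_add_sq_div _ _ hp hq
    _ ≤ (p + q) * ((#s - 1) * (∑ i ∈ s.erase k, ‖v i‖ ^ 2) / p + ‖v k‖ ^ 2 / q) := by
      rw [← cast_card_erase_of_mem hk]
      gcongr
      exact norm_sum_sq_le_card_mul_sum_norm_sq _ _

end SumInequalities

section Curvature

variable {ι W : Type*} [SeminormedAddCommGroup W]

/-- The algebraic Casorati curvature of the span of the frame vectors indexed by `s`, where `ζ i j`
are the components of a `W`-valued bilinear map in that frame. The full Casorati curvature is the
case `s = univ`; the hyperplane spanned by all frame vectors but the `k`-th is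
`s = univ.erase k`. -/
noncomputable def casoratiCurvature (ζ : ι → ι → W) (s : Finset ι) : ℝ :=
  1 / #s * ∑ i ∈ s, ∑ j ∈ s, ‖ζ i j‖ ^ 2

/-- The coefficient `a(r)` of the hyperplane term in the Casorati inequality in dimension `n`. The
dimension is real so that no subtraction is truncated. -/
noncomputable def casoratiCoeff (n r : ℝ) : ℝ :=
  (n - 1) * (n + r) * (n ^ 2 - n - r) / (n * r)

theorem norm_trace_sq_sub_le_casorati [Fintype ι] [DecidableEq ι] (ζ : ι → ι → W) (k : ι)
    {r : ℝ} (hr0 : 0 < r) (hr1 : r ≤ Fintype.card ι * (Fintype.card ι - 1)) :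
    ‖∑ i, ζ i i‖ ^ 2 - ∑ i, ∑ j, ‖ζ i j‖ ^ 2 ≤
      r * casoratiCurvature ζ univ +
        casoratiCoeff (Fintype.card ι) r * casoratiCurvature ζ (univ.erase k) := by
  set n := (Fintype.card ι : ℝ)
  set S := ∑ i, ∑ j, ‖ζ i j‖ ^ 2
  set P := ∑ i ∈ univ.erase k, ∑ j ∈ univ.erase k, ‖ζ i j‖ ^ 2
  set D := ∑ i ∈ univ.erase k, ‖ζ i i‖ ^ 2
  have n_pos : 0 < n := Nat.cast_pos.mpr (Fintype.card_pos_iff.mpr ⟨k⟩)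
  have n_sub_one_pos : 0 < n - 1 := pos_of_mul_pos_right (hr0.trans_le hr1) n_pos.le
  have diag_le : D + ‖ζ k k‖ ^ 2 ≤ S := by
    rw [sum_erase_add _ _ (mem_univ k)]
    exact sum_diag_le_sum_sum univ fun i j => sq_nonneg ‖ζ i j‖
  have diag_erase_le : D ≤ P := sum_diag_le_sum_sum _ fun i j => sq_nonneg ‖ζ i j‖
  calc
    ‖∑ i, ζ i i‖ ^ 2 - S ≤ (r + n) * ((n - 1) * D / r + ‖ζ k k‖ ^ 2 / n) - S := by
      gcongr
      exact norm_sum_sq_le_add_mul_sum_erase (mem_univ k) (fun i => ζ i i) hr0 n_pos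
    _ = (n + r) / (n * r) * (r * (D + ‖ζ k k‖ ^ 2) + (n * (n - 1) - r) * D) - S := by
      field_simp
      ring
    _ ≤ (n + r) / (n * r) * (r * S + (n * (n - 1) - r) * P) - S := by gcongr
    _ = r * (1 / n * S) + casoratiCoeff n r * (1 / (n - 1) * P) := by
      unfold casoratiCoeff
      field_simp
      ring
    _ = r * casoratiCurvature ζ univ + casoratiCoeff n r * casoratiCurvature ζ (univ.erase k) := by
      rw [casoratiCurvature, casoratiCurvature, cast_card_erase_of_mem (mem_univ k), card_univ]

variable [InnerProductSpace ℝ W]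

/-- The scalar curvature `∑ i < j, T i j j i` of the tensor `T` that the algebraic Gauss equation
attaches to the components `ζ i j`, with `T i j j i` expanded. -/
noncomputable def gaussScalarCurvature [Fintype ι] [LinearOrder ι] (ζ : ι → ι → W) : ℝ :=
  ∑ i, ∑ j, if i < j then ⟪ζ i i, ζ j j⟫ - ⟪ζ i j, ζ j i⟫ else 0

theorem two_mul_gaussScalarCurvature [Fintype ι] [LinearOrder ι] {ζ : ι → ι → W}
    (hζ : ∀ i j, ζ i j = ζ j i) :
    2 * gaussScalarCurvature ζ = ‖∑ i, ζ i i‖ ^ 2 - ∑ i, ∑ j, ‖ζ i j‖ ^ 2 :=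
  calc
    2 * gaussScalarCurvature ζ = ∑ i, ∑ j, (⟪ζ i i, ζ j j⟫ - ⟪ζ i j, ζ j i⟫) := by
      rw [two_mul, ← two_nsmul]
      exact two_nsmul_sum_sum_ite_lt
        (fun i j => by rw [real_inner_comm, real_inner_comm (ζ i j)]) (fun i => sub_self _)
    _ = ∑ i, ∑ j, ⟪ζ i i, ζ j j⟫ - ∑ i, ∑ j, ‖ζ i j‖ ^ 2 := by
      simp only [← hζ, real_inner_self_eq_norm_sq, sum_sub_distrib]
    _ = ‖∑ i, ζ i i‖ ^ 2 - ∑ i, ∑ j, ‖ζ i j‖ ^ 2 := by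
      rw [← real_inner_self_eq_norm_sq (∑ i, ζ i i), sum_inner]
      simp only [inner_sum]

theorem algebraic_casorati_inequality_small_r_general [Fintype ι] [LinearOrder ι]
    {ζ : ι → ι → W} (hζ : ∀ i j, ζ i j = ζ j i) (k : ι)
    {r : ℝ} (hr0 : 0 < r) (hr1 : r ≤ Fintype.card ι * (Fintype.card ι - 1)) :
    2 * gaussScalarCurvature ζ / (Fintype.card ι * (Fintype.card ι - 1)) ≤
      1 / (Fintype.card ι * (Fintype.card ι - 1)) *
        (r * casoratiCurvature ζ univ +
          casoratiCoeff (Fintype.card ι) r * casoratiCurvature ζ (univ.erase k)) := by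
  rw [div_eq_inv_mul, ← one_div, two_mul_gaussScalarCurvature hζ]
  exact mul_le_mul_of_nonneg_left (norm_trace_sq_sub_le_casorati ζ k hr0 hr1)
    (one_div_nonneg.mpr (hr0.le.trans hr1))

end Curvature

theorem filter_val_lt_eq_univ_erase {n : ℕ} {k : Fin n} (hk : (k : ℕ) = n - 1) :
    univ.filter (fun i : Fin n => (i : ℕ) < n - 1) = univ.erase k := by
  grind

/-- For `0 < r < n(n−1)` and any orthonormal basis, the normalized
`T`-scalar curvature is bounded by `(1/(n(n−1)))(r·C^{T,ζ} + a(r)·C^{T,ζ}(P_{n−1}))`,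
where `P_{n−1}` is the hyperplane spanned by `e_1,…,e_{n−1}`. -/
theorem algebraic_casorati_inequality_small_r
    {V W : Type*} [NormedAddCommGroup V] [InnerProductSpace ℝ V]
    [FiniteDimensional ℝ V] [NormedAddCommGroup W] [InnerProductSpace ℝ W]
    (n : ℕ) (hn : 2 ≤ n) (e : OrthonormalBasis (Fin n) ℝ V)
    (ζ : V →ₗ[ℝ] V →ₗ[ℝ] W) (hζ : ∀ X Y : V, ζ X Y = ζ Y X)
    (T : V → V → V → V → ℝ)
    (hT : ∀ X Y Z W' : V, T X Y Z W' = ⟪ζ X W', ζ Y Z⟫ - ⟪ζ X Z, ζ Y W'⟫)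
    (r : ℝ) (hr0 : 0 < r) (hr1 : r < (n : ℝ) * ((n : ℝ) - 1))
    (τ C CP : ℝ)
    (hτ : τ = ∑ i : Fin n, ∑ j : Fin n,
        if i < j then T (e i) (e j) (e j) (e i) else 0)
    (hC : C = (1 / (n : ℝ)) * ∑ i : Fin n, ∑ j : Fin n, ‖ζ (e i) (e j)‖ ^ 2)
    (hCP : CP = (1 / ((n : ℝ) - 1)) *
        ∑ i ∈ Finset.univ.filter (fun i : Fin n => (i : ℕ) < n - 1),
          ∑ j ∈ Finset.univ.filter (fun j : Fin n => (j : ℕ) < n - 1),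
            ‖ζ (e i) (e j)‖ ^ 2) :
    2 * τ / ((n : ℝ) * ((n : ℝ) - 1)) ≤
      (1 / ((n : ℝ) * ((n : ℝ) - 1))) *
        (r * C +
          (((n : ℝ) - 1) * ((n : ℝ) + r) * ((n : ℝ) ^ 2 - (n : ℝ) - r) / ((n : ℝ) * r))
            * CP) := by
  let k : Fin n := ⟨n - 1, by omega⟩
  let z : Fin n → Fin n → W := fun i j => ζ (e i) (e j)
  have scalar_eq : τ = gaussScalarCurvature z := by simp only [hτ, hT, gaussScalarCurvature, z]
  have casorati_eq : C = casoratiCurvature z univ := by rw [hC, casoratiCurvature, card_fin]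
  have casorati_hyperplane_eq : CP = casoratiCurvature z (univ.erase k) := by
    rw [hCP, filter_val_lt_eq_univ_erase (k := k) rfl, casoratiCurvature,
      cast_card_erase_of_mem (mem_univ k), card_fin]
  rw [scalar_eq, casorati_eq, casorati_hyperplane_eq]
  simpa only [Fintype.card_fin, casoratiCoeff] using
    algebraic_casorati_inequality_small_r_general (ζ := z) (fun i j => hζ (e i) (e j)) k hr0
      (by simpa only [Fintype.card_fin] using hr1.le)
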